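/- Let n ≥ 1, let a : Fin n → ℝ, let ε > 0, and fix an index i. If there is no index j with a i < a j ≤ a i + ε, then the intersection of S(a, ε) with the line ℓ_i through L_i with slope 2·(a i) + ε is exactly the two-point set {L_i, T_i}. -/

import Mathlib

/-!
The line `ℓ_i` is the secant of the parabola `y = x²` over `a i` and `a i + ε`, so it contains `L_k`
only if `a k` is one of these two abscissae. The point `T_k` is the midpoint of the chord over `a k`
and `a k + ε`. All the `T_k` lie on the parabola `y = x² + ε² / 4`, to which `ℓ_i` is tangent at
`T_i`, so `ℓ_i` contains `T_k` only if `a k = a i`.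
-/

namespace ParabolaSecant

section CommRing

variable {R : Type*} [CommRing R]

/-- The point of the parabola `y = x²` with abscissa `x`; `L_k` is `parabolaPoint (a k)`. -/
def parabolaPoint (x : R) : R × R := (x, x ^ 2)

/-- The secant of the parabola `y = x²` over `x` and `x + ε`, given by its slope `2 * x + ε` so that
it is also defined (as the tangent) for `ε = 0`; `ℓ_i` is `secantLine ε (a i)`. -/
def secantLine (ε x : R) : Set (R × R) := {q | q.2 = x ^ 2 + (2 * x + ε) * (q.1 - x)}

theorem parabolaPoint_mem_secantLine_iff [NoZeroDivisors R] {ε x y : R} :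
    parabolaPoint y ∈ secantLine ε x ↔ y = x ∨ y = x + ε := by
  have factorization :
      y ^ 2 - (x ^ 2 + (2 * x + ε) * (y - x)) = (y - x) * (y - (x + ε)) := by ring
  change y ^ 2 = x ^ 2 + (2 * x + ε) * (y - x) ↔ _
  rw [← sub_eq_zero, factorization, mul_eq_zero, sub_eq_zero, sub_eq_zero]

end CommRing

section Field

variable {K ι : Type*} [Field K]

/-- The midpoint of the chord of the parabola `y = x²` over `x` and `x + ε`, with its ordinate
written relative to the parabola; `T_k` is `chordMidpoint ε (a k)`. -/
def chordMidpoint (ε x : K) : K × K := (x + ε / 2, (x + ε / 2) ^ 2 + ε ^ 2 / 4)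

/-- The configuration `S(a, ε)` of all points `L_k` and `T_k`. -/
def pointSet (a : ι → K) (ε : K) : Set (K × K) :=
  {q | ∃ k, q = parabolaPoint (a k)} ∪ {q | ∃ k, q = chordMidpoint ε (a k)}

variable [NeZero (2 : K)]

theorem chordMidpoint_mem_secantLine_iff {ε x y : K} :
    chordMidpoint ε y ∈ secantLine ε x ↔ y = x := by
  have tangency :
      (y + ε / 2) ^ 2 + ε ^ 2 / 4 - (x ^ 2 + (2 * x + ε) * (y + ε / 2 - x)) = (y - x) ^ 2 := by
    have four_eq : (4 : K) = 2 ^ 2 := by norm_num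
    rw [four_eq]
    field_simp
    ring
  change (y + ε / 2) ^ 2 + ε ^ 2 / 4 = x ^ 2 + (2 * x + ε) * (y + ε / 2 - x) ↔ _
  rw [← sub_eq_zero, tangency, sq_eq_zero_iff, sub_eq_zero]

end Field

end ParabolaSecant

open ParabolaSecant in
theorem line_meets_S_in_exactly_two_points_general {K ι : Type*} [Field K] [NeZero (2 : K)]
    (a : ι → K) (ε : K) (i : ι) (h : a i + ε ∉ Set.range a) :
    pointSet a ε ∩ secantLine ε (a i) = {parabolaPoint (a i), chordMidpoint ε (a i)} := by
  apply Set.Subset.antisymm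
  · rintro _ ⟨⟨k, rfl⟩ | ⟨k, rfl⟩, hk⟩
    · have hki : a k = a i :=
        (parabolaPoint_mem_secantLine_iff.mp hk).resolve_right fun hk' => h ⟨k, hk'⟩
      exact Or.inl (congrArg parabolaPoint hki)
    · exact Or.inr (congrArg (chordMidpoint ε) (chordMidpoint_mem_secantLine_iff.mp hk))
  · rintro _ (rfl | rfl)
    · exact ⟨Or.inl ⟨i, rfl⟩, parabolaPoint_mem_secantLine_iff.mpr (Or.inl rfl)⟩
    · exact ⟨Or.inr ⟨i, rfl⟩, chordMidpoint_mem_secantLine_iff.mpr rfl⟩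

theorem line_meets_S_in_exactly_two_points (n : ℕ) (hn : 1 ≤ n) (a : Fin n → ℝ)
    (ε : ℝ) (hε : 0 < ε) (i : Fin n)
    (h : ¬∃ j : Fin n, a i < a j ∧ a j ≤ a i + ε) :
    (({q : ℝ × ℝ | ∃ k : Fin n, q = (a k, (a k)^2)} ∪
      {q : ℝ × ℝ | ∃ k : Fin n, q = (a k + ε/2, (a k + ε/2)^2 + ε^2/4)}) ∩
     {q : ℝ × ℝ | q.2 = (a i)^2 + (2 * a i + ε) * (q.1 - a i)}) =
    {((a i, (a i)^2) : ℝ × ℝ), ((a i + ε/2, (a i + ε/2)^2 + ε^2/4) : ℝ × ℝ)} :=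
  line_meets_S_in_exactly_two_points_general a ε i
    fun ⟨j, hj⟩ => h ⟨j, hj ▸ lt_add_of_pos_right (a i) hε, hj.le⟩
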